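/- (Linear convergence of Graph-Aware ATC GT-Diffusion) Define the block maxima C_i = max_{k∈𝓘_i} ‖𝒞^k‖, T_i = max_{k∈𝓘_i} ‖𝒯^k‖, S_i = max_{k∈𝓘_i} ‖s^k‖ over blocks 𝓘_i = {iτ,…,(i+1)τ−1}. If the stepsize satisfies μ ≤ min{ 1/(τm), 1/(4c₂L), 1/(2c_{H'}L), (1/L)·√(3τ/(2Q K₃)) }, then there exists a constant ϱ > 0 such that for all i ≥ 0, C_i + T_i + S_i ≤ ϱ (1 − (mτ/4)μ)^i (C_0 + T_0 + S_0). Consequently ‖𝒞^k‖ → 0, ‖𝒯^k‖ → 0, ‖s^k‖ → 0, and the stacked state Z^k converges linearly to 𝟙 ⊗ z*. -/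

import Mathlib

/-!
Linear convergence follows from a small-gain argument for three scalar quantities observed at the
block starts `k = i τ`: the disagreement `c = ‖𝒞^k‖`, the scaled tracking error `t = ‖𝒯^k‖ / L`, and
the scaled optimality error `σ = √R ‖s^k‖`. With `η = μ L` the recursion gives

* `𝒞^{k+1} = 𝒲^k 𝒞^k - μ 𝒲^k 𝒯^k`, a perturbation of size `η t`;
* `𝒯^{k+1} = 𝒲^k 𝒯^k + J⊥ (∇𝓕^{k+1} - ∇𝓕^k)`, a perturbation of size at most
  `L ((2 + η) c + η t + η σ)`;
* `s^{k+1} = s^k - μ (H s^k + (1/R) Σ_r H_r 𝒞_r^k)`, whence `σ' ≤ (1 - (3/4) μ m) σ + η c`.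

Doubly stochastic matrices are nonexpansive and a whole block contracts zero-average vectors by `ε`
(`norm_block_le`), so over one block the triple `(c, t, σ)` grows in a controlled way
(`block_growth`) and the values at consecutive block starts satisfy a linear system of
inequalities. The diagonal entries are about `ε`, `ε` and `1 - (3/8) τ μ m`. The two feedback loops
`c → t → c` and `c → σ → t → c` have gains of order `η τ² / (1 - ε)²` and `Q η² τ² / (1 - ε)²`,
both made small by the stepsize condition (`stepsize_bounds`). A weighted sum `lyap` of the three
quantities therefore contracts by `1 - τ μ m / 4` per block (`contraction_arith`, `block_step`).
Since `lyap` at a block start bounds all the errors inside the block, the block maxima decay at the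
same rate, and the limits follow.
-/

open scoped BigOperators RealInnerProductSpace

namespace GTDiff

/-! ### Scalar inequalities for one block -/

/-- The bounds `c ≤ c0 + η n A`, `t ≤ A`, `σ ≤ σ0 + n η (c0 + η n A)` inside a block are
self-consistent: the tracking increments they allow over `n` steps keep `t` below `A`. -/
lemma growth_arith {n η A c0 t0 σ0 : ℝ} (hn : 1 ≤ n) (hη : 0 ≤ η) (hh : η * n ^ 2 ≤ 1 / 72)
    (hc0 : 0 ≤ c0) (ht0 : 0 ≤ t0) (hσ0 : 0 ≤ σ0)
    (hA : A = 2 * t0 + 6 * n * c0 + 2 * η * n * σ0) :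
    n * ((2 + η) * (c0 + η * n * A) + η * A + η * (σ0 + n * η * (c0 + η * n * A)))
      ≤ 21 / 10 * n * c0 + η * n * σ0 + 4 * η * n ^ 2 * A
    ∧ t0 + (21 / 10 * n * c0 + η * n * σ0 + 4 * η * n ^ 2 * A) ≤ A := by
  have hn0 : 0 ≤ n := by linarith
  have hA0 : 0 ≤ A := by rw [hA]; positivity
  have h1 : η * n ≤ η * n ^ 2 := by
    have : n ≤ n ^ 2 := by nlinarith
    exact mul_le_mul_of_nonneg_left this hη
  have h2 : η ≤ η * n := by nlinarith
  have h0 : 0 ≤ η * n := by positivity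
  have hu0 : 0 ≤ η * n ^ 2 := by positivity
  constructor
  · have e : n * ((2 + η) * (c0 + η * n * A) + η * A + η * (σ0 + n * η * (c0 + η * n * A)))
        = n * c0 * (2 + η + η * (η * n)) + η * n * σ0
          + A * (η * n ^ 2 * (2 + η) + η * n + (η * n ^ 2) * (η * n) * η) := by ring
    have b1 : 2 + η + η * (η * n) ≤ 21 / 10 := by nlinarith
    have b3 : (η * n ^ 2) * (η * n) ≤ η * n ^ 2 := by nlinarith
    have b4 : (η * n ^ 2) * (η * n) * η ≤ η * n ^ 2 * η := mul_le_mul_of_nonneg_right b3 hη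
    have b5 : η * n ^ 2 * η ≤ η * n ^ 2 * (1 / 72) :=
      mul_le_mul_of_nonneg_left (by linarith) hu0
    have b2 : η * n ^ 2 * (2 + η) + η * n + (η * n ^ 2) * (η * n) * η ≤ 4 * (η * n ^ 2) := by
      nlinarith
    have p1 := mul_le_mul_of_nonneg_left b1 (mul_nonneg hn0 hc0)
    have p2 := mul_le_mul_of_nonneg_left b2 hA0
    rw [e]; linarith
  · have p : η * n ^ 2 * A ≤ 1 / 72 * A := mul_le_mul_of_nonneg_right hh hA0
    have q1 : 0 ≤ n * c0 := by positivity
    have q2 : 0 ≤ η * n * σ0 := by positivity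
    linarith

/-- Growth inside one block of length `n`, by strong induction on the position `j`. The bound on
`σ j` keeps the strong-convexity contraction, using `(1 - a)^j ≤ 1 - a j / 2` when `a n ≤ 1`. -/
lemma block_growth (n : ℕ) (hn : 1 ≤ n) {η a A : ℝ} (hη : 0 ≤ η) (hh : η * (n : ℝ) ^ 2 ≤ 1 / 72)
    (ha : 0 ≤ a) (han : a * n ≤ 1) (c t σ : ℕ → ℝ)
    (hc0 : 0 ≤ c 0) (ht0 : 0 ≤ t 0) (hσ0 : 0 ≤ σ 0)
    (hA : A = 2 * t 0 + 6 * n * c 0 + 2 * η * n * σ 0)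
    (hc : ∀ j ≤ n, c j ≤ c 0 + ∑ l ∈ Finset.range j, η * t l)
    (ht : ∀ j ≤ n, t j ≤ t 0 + ∑ l ∈ Finset.range j, ((2 + η) * c l + η * t l + η * σ l))
    (hσ : ∀ j < n, σ (j + 1) ≤ (1 - a) * σ j + η * c j) :
    ∀ j ≤ n, c j ≤ c 0 + η * n * A ∧ t j ≤ A ∧
      σ j ≤ (1 - a * j / 2) * σ 0 + j * η * (c 0 + η * n * A) := by
  have hn1 : (1 : ℝ) ≤ n := by exact_mod_cast hn
  have hA0 : 0 ≤ A := by rw [hA]; positivity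
  obtain ⟨g1, g2⟩ := growth_arith hn1 hη hh hc0 ht0 hσ0 hA
  set M := c 0 + η * n * A with hM
  have hM0 : 0 ≤ M := by positivity
  intro j
  induction j using Nat.strong_induction_on with
  | _ j ih =>
    intro hj
    have hjn : (j : ℝ) ≤ n := by exact_mod_cast hj
    have hσ' : ∀ l < j, σ l ≤ σ 0 + n * η * M := by
      intro l hl
      have h1 := (ih l hl (by omega)).2.2
      have h2 : (l : ℝ) ≤ n := by exact_mod_cast (by omega : l ≤ n)
      have h3 : (l : ℝ) * (η * M) ≤ n * (η * M) := mul_le_mul_of_nonneg_right h2 (by positivity)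
      have h4 : 0 ≤ a * l / 2 * σ 0 := by positivity
      nlinarith
    refine ⟨?_, ?_, ?_⟩
    · have := Finset.sum_le_card_nsmul (Finset.range j) (fun l => η * t l) (η * A) (by
        intro l hl
        have hl := Finset.mem_range.1 hl
        exact mul_le_mul_of_nonneg_left (ih l hl (by omega)).2.1 hη)
      simp only [Finset.card_range, nsmul_eq_mul] at this
      have h3 : (j : ℝ) * (η * A) ≤ n * (η * A) := mul_le_mul_of_nonneg_right hjn (by positivity)
      have := hc j hj
      rw [hM]; nlinarith
    · have := Finset.sum_le_card_nsmul (Finset.range j)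
        (fun l => (2 + η) * c l + η * t l + η * σ l)
        ((2 + η) * M + η * A + η * (σ 0 + n * η * M)) (by
        intro l hl
        have hl := Finset.mem_range.1 hl
        have h1 := (ih l hl (by omega)).1
        have h2 := (ih l hl (by omega)).2.1
        have h3 := hσ' l hl
        have p1 := mul_le_mul_of_nonneg_left h1 (by linarith : 0 ≤ 2 + η)
        have p2 := mul_le_mul_of_nonneg_left h2 hη
        have p3 := mul_le_mul_of_nonneg_left h3 hη
        linarith)
      simp only [Finset.card_range, nsmul_eq_mul] at this
      have h3 : (j : ℝ) * ((2 + η) * M + η * A + η * (σ 0 + n * η * M))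
          ≤ n * ((2 + η) * M + η * A + η * (σ 0 + n * η * M)) :=
        mul_le_mul_of_nonneg_right hjn (by positivity)
      have := ht j hj
      linarith
    · rcases j with _ | j
      · simp
      · obtain ⟨h1, -, h3⟩ := ih j (by omega) (by omega)
        have h4 := hσ j (by omega)
        have ha1 : a ≤ 1 := by nlinarith
        have hjn' : (j : ℝ) ≤ n := by exact_mod_cast (by omega : j ≤ n)
        have haj : a * j ≤ 1 := le_trans (mul_le_mul_of_nonneg_left hjn' ha) han
        have p1 := mul_le_mul_of_nonneg_left h3 (by linarith : 0 ≤ 1 - a)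
        have p2 := mul_le_mul_of_nonneg_left h1 hη
        have p3 : 0 ≤ a * (1 - a * j) * σ 0 :=
          mul_nonneg (mul_nonneg ha (by linarith)) hσ0
        have p4 : 0 ≤ a * (j * η * M) := by positivity
        push_cast
        nlinarith

/-- The Lyapunov function evaluated at block starts, with `c = ‖𝒞‖`, `t = ‖𝒯‖ / L`,
`σ = √R ‖s‖`, block length `n`, `η = μ L` and condition number `Q`. The weight of `c` is of order
`(n + Q η n) / (1 - ε)` because the disagreement feeds both the tracking error (gain `≈ 2 n`) and
the optimality error (gain `≈ η n` with weight of order `Q`). -/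
noncomputable def lyap (n η Q ε c t σ : ℝ) : ℝ :=
  (4 * n + 60 * Q * η * n) / (1 - ε) * c + t + 20 * Q * σ

/-- The linear inequalities linking two consecutive block starts make `lyap` contract by the
factor `1 - n x / 4`, where `x = μ m`. The three coefficient inequalities are the column conditions
of a weighted small-gain argument. -/
lemma contraction_arith {n η Q x ε A c0 t0 σ0 c' t' σ' : ℝ} (hn : 1 ≤ n) (hη : 0 ≤ η)
    (hQ : 1 ≤ Q) (hx : Q * x = η) (hε0 : 0 ≤ ε) (hε1 : ε < 1)
    (hh : η * n ^ 2 ≤ (1 - ε) ^ 2 / 72) (hq : Q * η ^ 2 * n ^ 2 ≤ (1 - ε) ^ 2 / 1000)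
    (hc0 : 0 ≤ c0) (ht0 : 0 ≤ t0) (hσ0 : 0 ≤ σ0)
    (hA : A = 2 * t0 + 6 * n * c0 + 2 * η * n * σ0)
    (hc : c' ≤ ε * c0 + η * n * A)
    (ht : t' ≤ ε * t0 + (21 / 10 * n * c0 + η * n * σ0 + 4 * η * n ^ 2 * A))
    (hσ : σ' ≤ (1 - 3 / 8 * n * x) * σ0 + n * η * (c0 + η * n * A)) :
    lyap n η Q ε c' t' σ' ≤ (1 - n * x / 4) * lyap n η Q ε c0 t0 σ0 := by
  unfold lyap
  have hn0 : 0 ≤ n := by linarith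
  have hδ : 0 < 1 - ε := by linarith
  have hδ1 : 1 - ε ≤ 1 := by linarith
  have hx0 : 0 ≤ x := by
    by_contra h
    push Not at h
    nlinarith
  have hxη : x ≤ η := by nlinarith
  set α := (4 * n + 60 * Q * η * n) / (1 - ε) with hα
  have hα0 : 0 ≤ α := by positivity
  have hαδ : α * (1 - ε) = 4 * n + 60 * Q * η * n := by rw [hα]; field_simp
  generalize α = α at *
  obtain ⟨u, hu⟩ : ∃ u, u = η * n ^ 2 := ⟨_, rfl⟩
  obtain ⟨δ, hd⟩ : ∃ δ, δ = 1 - ε := ⟨_, rfl⟩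
  obtain ⟨w, hw⟩ : ∃ w, w = Q * η ^ 2 * n ^ 2 := ⟨_, rfl⟩
  rw [← hu, ← hd] at hh
  rw [← hw, ← hd] at hq
  rw [← hd] at hαδ hδ hδ1
  have hε : ε = 1 - δ := by linarith
  have hu0 : 0 ≤ u := by rw [hu]; positivity
  have hw0 : 0 ≤ w := by rw [hw]; positivity
  have hηn0 : 0 ≤ η * n := by positivity
  have hηnu : η * n ≤ u := by
    have : n ≤ n ^ 2 := by nlinarith
    rw [hu]; exact mul_le_mul_of_nonneg_left this hη
  have hnx : n * x ≤ u := le_trans (by nlinarith) hηnu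
  have hnx0 : 0 ≤ n * x := by positivity
  have hδ2 : δ ^ 2 ≤ δ := by nlinarith
  have huδ : u ≤ δ / 72 := by linarith
  have hwδ : w ≤ δ / 1000 := by linarith
  have hQη : 0 ≤ Q * (η * n) := by positivity
  -- coefficient of `c0`
  have k1 : α * (1 - δ + 6 * u) + (21 / 10 * n + 24 * u * n) + 20 * (Q * (η * n)) * (1 + 6 * u)
      ≤ (1 - n * x / 4) * α := by
    have h1 : α * (9 / 10 * δ) ≤ α * (δ - 6 * u - n * x / 4) :=
      mul_le_mul_of_nonneg_left (by linarith) hα0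
    have h2 : u * n ≤ 1 / 72 * n := mul_le_mul_of_nonneg_right (by linarith) hn0
    have h3 : Q * (η * n) * u ≤ Q * (η * n) * (1 / 72) :=
      mul_le_mul_of_nonneg_left (by linarith) hQη
    linarith
  have hαη : α * (2 * (η * n)) ≤ 24 / 100 * δ := by
    have h1 : α * (2 * (η * n)) * δ = 8 * u + 120 * w := by
      rw [hu, hw]; linear_combination (2 * (η * n)) * hαδ
    have h2 : α * (2 * (η * n)) * δ ≤ 24 / 100 * δ * δ := by
      rw [h1, mul_assoc, ← sq]
      linarith [sq_nonneg δ]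
    exact le_of_mul_le_mul_right h2 hδ
  -- coefficient of `t0`
  have k2 : α * (2 * (η * n)) + (1 - δ + 8 * u) + 40 * w ≤ 1 - n * x / 4 := by linarith
  -- coefficient of `σ0`
  have k3 : α * (2 * (η * n) * (η * n)) + (η * n + 8 * u * (η * n))
      + 20 * Q * (1 - 3 / 8 * n * x) + 40 * w * (η * n) ≤ (1 - n * x / 4) * (20 * Q) := by
    have h1 : α * (2 * (η * n)) * (η * n) ≤ 24 / 100 * (η * n) :=
      mul_le_mul_of_nonneg_right (by linarith) hηn0
    have h2 : u * (η * n) ≤ 1 / 72 * (η * n) := mul_le_mul_of_nonneg_right (by linarith) hηn0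
    have h3 : w * (η * n) ≤ 1 / 1000 * (η * n) := mul_le_mul_of_nonneg_right (by linarith) hηn0
    have h4 : Q * (n * x) = η * n := by rw [← hx]; ring
    linarith
  have m1 := mul_le_mul_of_nonneg_right k1 hc0
  have m2 := mul_le_mul_of_nonneg_right k2 ht0
  have m3 := mul_le_mul_of_nonneg_right k3 hσ0
  have l1 := mul_le_mul_of_nonneg_left hc hα0
  have l3 := mul_le_mul_of_nonneg_left hσ (by linarith : 0 ≤ 20 * Q)
  have e : α * (ε * c0 + η * n * A) + (ε * t0 + (21 / 10 * n * c0 + η * n * σ0 + 4 * η * n ^ 2 * A))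
      + 20 * Q * ((1 - 3 / 8 * n * x) * σ0 + n * η * (c0 + η * n * A))
      = (α * (1 - δ + 6 * u) + (21 / 10 * n + 24 * u * n) + 20 * (Q * (η * n)) * (1 + 6 * u)) * c0
      + (α * (2 * (η * n)) + (1 - δ + 8 * u) + 40 * w) * t0
      + (α * (2 * (η * n) * (η * n)) + (η * n + 8 * u * (η * n))
        + 20 * Q * (1 - 3 / 8 * n * x) + 40 * w * (η * n)) * σ0 := by
    rw [hA, hε, hu, hw]; ring
  linarith



/-! ### Consequences of the stepsize condition -/

/-- Smallness of the two feedback gains under the stepsize condition; it follows from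
`c_{H'} ≥ 36 τ² / (1 - ε)²` and `K₃ ≥ 1500 τ³ / (1 - ε)²`. -/
lemma stepsize_bounds {τ : ℕ} (hτ : 0 < τ) {L m Q ε c₁ c₂ c₃ c₄ cP cS cH' K₃ μ : ℝ}
    (hL : 0 < L) (hm : 0 < m) (hQ : Q = L / m) (hε0 : 0 < ε) (hε1 : ε < 1)
    (hc₁ : c₁ = 2 - 1 / (τ : ℝ))
    (hc₂ : c₂ = (2 * (τ : ℝ) + 1) * ((τ : ℝ) - 1))
    (hc₃ : c₃ = 1 + ε)
    (hc₄ : c₄ = 2 * (τ : ℝ) + 1)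
    (hcP : cP = 2 + 4 * (1 + ε) / (1 - ε))
    (hcS : cS = (4 / (1 - ε)) * cP)
    (hcH' : cH' = 2 * c₁ * (c₂ * c₃ + (τ : ℝ) * c₄)
        * (2 / (1 - ε) + 4 * (1 + ε) / (1 - ε) ^ 2))
    (hK₃ : K₃ = cP * (19 * c₁ * c₂ ^ 2 * (c₂ * c₃ + (τ : ℝ) * c₄)
        + 60 * cS * c₁ ^ 2 * c₂ * (c₂ * c₃ + (τ : ℝ) * c₄) ^ 2
        + 48 * cS ^ 2 * (1 + cP) * c₁ ^ 3 * (c₂ * c₃ + (τ : ℝ) * c₄) ^ 3))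
    (hμ : 0 < μ)
    (hμ3 : μ ≤ 1 / (2 * cH' * L))
    (hμ4 : μ ≤ (1 / L) * Real.sqrt (3 * (τ : ℝ) / (2 * Q * K₃))) :
    (μ * L) * (τ : ℝ) ^ 2 ≤ (1 - ε) ^ 2 / 72 ∧
      Q * (μ * L) ^ 2 * (τ : ℝ) ^ 2 ≤ (1 - ε) ^ 2 / 1000 := by
  have ht : (1 : ℝ) ≤ τ := by exact_mod_cast hτ
  have hδ : 0 < 1 - ε := by linarith
  have hQ0 : 0 < Q := by rw [hQ]; positivity
  have h1 : 1 ≤ c₁ := by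
    have : 1 / (τ : ℝ) ≤ 1 := by rw [div_le_one (by linarith)]; exact ht
    linarith
  have h2 : 0 ≤ c₂ := by rw [hc₂]; exact mul_nonneg (by linarith) (by linarith)
  obtain ⟨B, hB⟩ : ∃ B, B = c₂ * c₃ + (τ : ℝ) * c₄ := ⟨_, rfl⟩
  have hB3 : 3 * (τ : ℝ) ^ 2 ≤ B := by
    have : c₂ * 1 ≤ c₂ * c₃ := mul_le_mul_of_nonneg_left (by linarith) h2
    rw [hB, hc₄]
    nlinarith
  have hB1 : (τ : ℝ) ≤ B := by nlinarith
  have hP6 : 6 ≤ cP := by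
    have : 4 ≤ 4 * (1 + ε) / (1 - ε) := by rw [le_div_iff₀ hδ]; linarith
    linarith
  have hS : 24 / (1 - ε) ≤ cS := by
    rw [hcS]
    have := mul_le_mul_of_nonneg_left hP6 (by positivity : 0 ≤ 4 / (1 - ε))
    calc 24 / (1 - ε) = 4 / (1 - ε) * 6 := by ring
      _ ≤ _ := this
  have hS0 : 0 < cS := lt_of_lt_of_le (by positivity) hS
  rw [← hB] at hcH' hK₃
  have hB0 : 0 < B := by linarith
  constructor
  · have hD : 6 / (1 - ε) ^ 2 ≤ 2 / (1 - ε) + 4 * (1 + ε) / (1 - ε) ^ 2 := by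
      have : 2 / (1 - ε) = 2 * (1 - ε) / (1 - ε) ^ 2 := by field_simp
      rw [this, ← add_div]
      gcongr
      linarith
    have hH : 36 * (τ : ℝ) ^ 2 / (1 - ε) ^ 2 ≤ cH' := by
      rw [hcH']
      calc 36 * (τ : ℝ) ^ 2 / (1 - ε) ^ 2
          = 2 * 1 * (3 * (τ : ℝ) ^ 2) * (6 / (1 - ε) ^ 2) := by ring
        _ ≤ _ := by gcongr
    have hH0 : 0 < cH' := lt_of_lt_of_le (by positivity) hH
    rw [le_div_iff₀ (by positivity)] at hμ3
    rw [div_le_iff₀ (by positivity)] at hH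
    have : μ * L * (36 * (τ : ℝ) ^ 2) ≤ μ * L * (cH' * (1 - ε) ^ 2) :=
      mul_le_mul_of_nonneg_left hH (by positivity)
    have h3 : (μ * (2 * cH' * L)) * (1 - ε) ^ 2 ≤ 1 * (1 - ε) ^ 2 :=
      mul_le_mul_of_nonneg_right hμ3 (by positivity)
    linarith
  · have hK : 1500 * (τ : ℝ) ^ 3 / (1 - ε) ^ 2 ≤ K₃ := by
      have e1 : 48 * cS ^ 2 * (1 + cP) * c₁ ^ 3 * B ^ 3 ≤
          (19 * c₁ * c₂ ^ 2 * B + 60 * cS * c₁ ^ 2 * c₂ * B ^ 2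
            + 48 * cS ^ 2 * (1 + cP) * c₁ ^ 3 * B ^ 3) := by
        have : 0 ≤ 19 * c₁ * c₂ ^ 2 * B := by positivity
        have : 0 ≤ 60 * cS * c₁ ^ 2 * c₂ * B ^ 2 := by positivity
        linarith
      rw [hK₃]
      calc 1500 * (τ : ℝ) ^ 3 / (1 - ε) ^ 2
          ≤ 165888 * (τ : ℝ) ^ 3 / (1 - ε) ^ 2 := by gcongr; norm_num
        _ = 6 * (48 * (24 / (1 - ε)) ^ 2 * (1 + 0) * 1 ^ 3 * (τ : ℝ) ^ 3) := by
            rw [div_pow]; ring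
        _ ≤ cP * (48 * cS ^ 2 * (1 + cP) * c₁ ^ 3 * B ^ 3) := by gcongr; linarith
        _ ≤ _ := mul_le_mul_of_nonneg_left e1 (by linarith)
    have hK0 : 0 < K₃ := lt_of_lt_of_le (by positivity) hK
    have h4 : μ * L ≤ Real.sqrt (3 * (τ : ℝ) / (2 * Q * K₃)) := by
      calc μ * L ≤ ((1 / L) * Real.sqrt (3 * (τ : ℝ) / (2 * Q * K₃))) * L :=
            mul_le_mul_of_nonneg_right hμ4 hL.le
        _ = _ := by field_simp
    have h5 : (μ * L) ^ 2 ≤ 3 * (τ : ℝ) / (2 * Q * K₃) :=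
      (Real.le_sqrt (by positivity) (by positivity)).1 h4
    rw [le_div_iff₀ (by positivity)] at h5
    rw [div_le_iff₀ (by positivity)] at hK
    have h6 : Q * (μ * L) ^ 2 * (1500 * (τ : ℝ) ^ 3) ≤ Q * (μ * L) ^ 2 * (K₃ * (1 - ε) ^ 2) :=
      mul_le_mul_of_nonneg_left hK (by positivity)
    have h7 := mul_le_mul_of_nonneg_right h5 (by positivity : 0 ≤ (1 - ε) ^ 2)
    have h8 : (Q * (μ * L) ^ 2 * (τ : ℝ) ^ 2) * (τ : ℝ) ≤ (1 - ε) ^ 2 / 1000 * τ := by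
      linarith
    exact le_of_mul_le_mul_right h8 (by linarith)

/-! ### Stacked vectors, mixing and centering -/

variable {R d : ℕ}

/-- The space `ℝ^{Rd}` of stacked agent states, with its Euclidean norm. -/
abbrev Stack (R d : ℕ) := PiLp 2 fun _ : Fin R => EuclideanSpace ℝ (Fin d)

/-- The action of `M ⊗ I_d` on a stacked vector. -/
noncomputable def mix (M : Matrix (Fin R) (Fin R) ℝ) (V : Stack R d) : Stack R d :=
  WithLp.toLp 2 fun r => ∑ q, M r q • V q

@[simp] lemma mix_apply (M : Matrix (Fin R) (Fin R) ℝ) (V : Stack R d) (r : Fin R) :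
    mix M V r = ∑ q, M r q • V q := rfl

lemma mix_sub (M : Matrix (Fin R) (Fin R) ℝ) (V V' : Stack R d) :
    mix M (V - V') = mix M V - mix M V' := by
  ext1 r; simp [smul_sub]

lemma mix_add (M : Matrix (Fin R) (Fin R) ℝ) (V V' : Stack R d) :
    mix M (V + V') = mix M V + mix M V' := by
  ext1 r; simp [smul_add, Finset.sum_add_distrib]

lemma mix_one (V : Stack R d) : mix 1 V = V := by
  ext1 r; simp [Matrix.one_apply]

lemma mix_mul (M N : Matrix (Fin R) (Fin R) ℝ) (V : Stack R d) :
    mix (M * N) V = mix M (mix N V) := by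
  ext1 r
  simp only [mix_apply, Matrix.mul_apply, Finset.sum_smul, Finset.smul_sum, smul_smul]
  exact Finset.sum_comm

lemma norm_sq_stack (V : Stack R d) : ‖V‖ ^ 2 = ∑ r, ‖V r‖ ^ 2 := PiLp.norm_sq_eq_of_L2 _ V

/-- `‖M ⊗ I_d‖ ≤ ‖M‖`: apply the operator norm bound to each of the `d` coordinates separately. -/
lemma norm_mix_le_opNorm (M : Matrix (Fin R) (Fin R) ℝ) (V : Stack R d) :
    ‖mix M V‖ ≤ ‖Matrix.toEuclideanCLM (𝕜 := ℝ) M‖ * ‖V‖ := by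
  refine le_of_sq_le_sq ?_ (by positivity)
  rw [mul_pow, norm_sq_stack, norm_sq_stack]
  simp only [EuclideanSpace.norm_sq_eq]
  rw [Finset.sum_comm, Finset.sum_comm (f := fun r i => ‖V r i‖ ^ 2), Finset.mul_sum]
  refine Finset.sum_le_sum fun i _ => ?_
  have h := (Matrix.toEuclideanCLM (𝕜 := ℝ) M).le_opNorm (WithLp.toLp 2 fun q => V q i)
  have h2 := pow_le_pow_left₀ (norm_nonneg _) h 2
  rw [mul_pow, EuclideanSpace.norm_sq_eq, EuclideanSpace.norm_sq_eq] at h2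
  simpa [Matrix.mulVec, dotProduct] using h2

/-- Doubly stochastic mixing is nonexpansive, by Jensen's inequality for the square along rows
and the column sums. -/
lemma norm_mix_le {M : Matrix (Fin R) (Fin R) ℝ} (h0 : ∀ r q, 0 ≤ M r q)
    (hrow : ∀ r, ∑ q, M r q = 1) (hcol : ∀ q, ∑ r, M r q = 1) (V : Stack R d) :
    ‖mix M V‖ ≤ ‖V‖ := by
  refine le_of_sq_le_sq ?_ (norm_nonneg _)
  rw [norm_sq_stack, norm_sq_stack]
  calc ∑ r, ‖mix M V r‖ ^ 2 ≤ ∑ r, ∑ q, M r q * ‖V q‖ ^ 2 := by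
        refine Finset.sum_le_sum fun r _ => ?_
        have h1 : ‖mix M V r‖ ≤ ∑ q, M r q * ‖V q‖ := by
          rw [mix_apply]
          refine (norm_sum_le _ _).trans (le_of_eq (Finset.sum_congr rfl fun q _ => ?_))
          rw [norm_smul, Real.norm_of_nonneg (h0 r q)]
        exact (pow_le_pow_left₀ (norm_nonneg _) h1 2).trans
          (Real.pow_arith_mean_le_arith_mean_pow Finset.univ _ _ (fun q _ => h0 r q) (hrow r)
            (fun q _ => norm_nonneg _) 2)
    _ = ∑ q, ‖V q‖ ^ 2 := by
        rw [Finset.sum_comm]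
        refine Finset.sum_congr rfl fun q _ => ?_
        rw [← Finset.sum_mul, hcol, one_mul]

lemma mix_const_eq_zero (x : ℝ) {V : Stack R d} (hV : ∑ r, V r = 0) :
    mix (Matrix.of fun _ _ : Fin R => x) V = 0 := by
  ext1 r
  simp [← Finset.smul_sum, hV]

/-- Unrolling `X (j+1) = W_j X j + N j`: since every `W_j` is nonexpansive, `X j` differs from
`P j X 0` by at most the sum of the perturbation sizes. -/
lemma norm_perturbed_le {τ : ℕ} {W : Fin τ → Matrix (Fin R) (Fin R) ℝ}
    (hW0 : ∀ l r q, 0 ≤ W l r q) (hrow : ∀ l r, ∑ q, W l r q = 1)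
    (hcol : ∀ l q, ∑ r, W l r q = 1)
    {P : ℕ → Matrix (Fin R) (Fin R) ℝ} (hP0 : P 0 = 1)
    (hPsucc : ∀ (l : ℕ) (hl : l < τ), P (l + 1) = W ⟨l, hl⟩ * P l)
    (X N : ℕ → Stack R d) (ν : ℕ → ℝ)
    (hX : ∀ (j : ℕ) (hj : j < τ), X (j + 1) = mix (W ⟨j, hj⟩) (X j) + N j)
    (hN : ∀ j < τ, ‖N j‖ ≤ ν j) :
    ∀ j ≤ τ, ‖mix (P j) (X 0)‖ ≤ ‖X 0‖ ∧
      ‖X j - mix (P j) (X 0)‖ ≤ ∑ l ∈ Finset.range j, ν l := by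
  intro j
  induction j with
  | zero => intro _; simp [hP0, mix_one]
  | succ j ih =>
    intro hj
    obtain ⟨h1, h2⟩ := ih (by omega)
    have hj' : j < τ := by omega
    have hm : ∀ V : Stack R d, ‖mix (W ⟨j, hj'⟩) V‖ ≤ ‖V‖ :=
      norm_mix_le (hW0 _) (hrow _) (hcol _)
    rw [hPsucc j hj', mix_mul]
    refine ⟨(hm _).trans h1, ?_⟩
    rw [hX j hj', Finset.sum_range_succ]
    have e : mix (W ⟨j, hj'⟩) (X j) + N j - mix (W ⟨j, hj'⟩) (mix (P j) (X 0))
        = mix (W ⟨j, hj'⟩) (X j - mix (P j) (X 0)) + N j := by rw [mix_sub]; abel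
    rw [e]
    exact (norm_add_le _ _).trans (add_le_add ((hm _).trans h2) (hN j hj'))

/-- A perturbed recursion over one block, started from a vector of zero average: nonexpansive at
every step, and contracting by `ε` over the whole block up to the accumulated perturbation. -/
lemma norm_block_le {τ : ℕ} {W : Fin τ → Matrix (Fin R) (Fin R) ℝ}
    (hW0 : ∀ l r q, 0 ≤ W l r q) (hrow : ∀ l r, ∑ q, W l r q = 1)
    (hcol : ∀ l q, ∑ r, W l r q = 1)
    {P : ℕ → Matrix (Fin R) (Fin R) ℝ} (hP0 : P 0 = 1)
    (hPsucc : ∀ (l : ℕ) (hl : l < τ), P (l + 1) = W ⟨l, hl⟩ * P l)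
    {ε : ℝ} (hcontr : ‖Matrix.toEuclideanCLM (𝕜 := ℝ)
        (P τ - Matrix.of fun _ _ : Fin R => (R : ℝ)⁻¹)‖ = ε)
    (X N : ℕ → Stack R d) (ν : ℕ → ℝ) (hX0 : ∑ r, X 0 r = 0)
    (hX : ∀ (j : ℕ) (hj : j < τ), X (j + 1) = mix (W ⟨j, hj⟩) (X j) + N j)
    (hN : ∀ j < τ, ‖N j‖ ≤ ν j) :
    (∀ j ≤ τ, ‖X j‖ ≤ ‖X 0‖ + ∑ l ∈ Finset.range j, ν l) ∧
      ‖X τ‖ ≤ ε * ‖X 0‖ + ∑ l ∈ Finset.range τ, ν l := by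
  have h := norm_perturbed_le hW0 hrow hcol hP0 hPsucc X N ν hX hN
  constructor
  · intro j hj
    obtain ⟨h1, h2⟩ := h j hj
    linarith [norm_sub_norm_le (X j) (mix (P j) (X 0))]
  · obtain ⟨-, h2⟩ := h τ le_rfl
    have h3 : mix (P τ) (X 0) = mix (P τ - Matrix.of fun _ _ : Fin R => (R : ℝ)⁻¹) (X 0) := by
      conv_lhs => rw [← sub_add_cancel (P τ) (Matrix.of fun _ _ : Fin R => (R : ℝ)⁻¹)]
      have e : mix (P τ - (Matrix.of fun _ _ : Fin R => (R : ℝ)⁻¹)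
          + Matrix.of fun _ _ : Fin R => (R : ℝ)⁻¹) (X 0)
          = mix (P τ - Matrix.of fun _ _ : Fin R => (R : ℝ)⁻¹) (X 0)
            + mix (Matrix.of fun _ _ : Fin R => (R : ℝ)⁻¹) (X 0) := by
        ext1 r
        simp only [mix_apply, PiLp.add_apply, Matrix.add_apply, add_smul, Finset.sum_add_distrib]
      rw [e, mix_const_eq_zero _ hX0, add_zero]
    have h4 := norm_mix_le_opNorm (P τ - Matrix.of fun _ _ : Fin R => (R : ℝ)⁻¹) (X 0)
    rw [hcontr, ← h3] at h4
    linarith [norm_sub_norm_le (X τ) (mix (P τ) (X 0))]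

/-- The projection `J⊥`: subtraction of the average over the agents from every block. -/
noncomputable def center (V : Stack R d) : Stack R d :=
  WithLp.toLp 2 fun r => V r - (R : ℝ)⁻¹ • ∑ q, V q

@[simp] lemma center_apply (V : Stack R d) (r : Fin R) :
    center V r = V r - (R : ℝ)⁻¹ • ∑ q, V q := rfl

lemma sum_center (hR : 0 < R) (V : Stack R d) : ∑ r, center V r = 0 := by
  have : (R : ℝ) ≠ 0 := by positivity
  simp only [center_apply, Finset.sum_sub_distrib, Finset.sum_const, Finset.card_univ,
    Fintype.card_fin]
  rw [← Nat.cast_smul_eq_nsmul ℝ, smul_smul, mul_inv_cancel₀ this, one_smul, sub_self]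

lemma norm_center_le (hR : 0 < R) (V : Stack R d) : ‖center V‖ ≤ ‖V‖ := by
  refine le_of_sq_le_sq ?_ (norm_nonneg _)
  rw [norm_sq_stack, norm_sq_stack]
  set v := (R : ℝ)⁻¹ • ∑ q, V q with hv
  have h0 : ∑ r, ⟪center V r, v⟫ = 0 := by rw [← sum_inner, sum_center hR, inner_zero_left]
  have h1 : ∀ r, ‖V r‖ ^ 2 = ‖center V r‖ ^ 2 + 2 * ⟪center V r, v⟫ + ‖v‖ ^ 2 := by
    intro r
    rw [← norm_add_sq_real]
    simp [← hv]
  have h2 : ∑ r, ‖V r‖ ^ 2 = ∑ r, ‖center V r‖ ^ 2 + ∑ _r : Fin R, ‖v‖ ^ 2 := by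
    rw [Finset.sum_congr rfl fun r _ => h1 r, Finset.sum_add_distrib, Finset.sum_add_distrib,
      ← Finset.mul_sum, h0, mul_zero, add_zero]
  rw [h2]
  exact le_add_of_nonneg_right (by positivity)

lemma norm_const_stack (v : EuclideanSpace ℝ (Fin d)) :
    ‖(WithLp.toLp 2 fun _ => v : Stack R d)‖ = √R * ‖v‖ := by
  refine (sq_eq_sq₀ (norm_nonneg _) (by positivity)).1 ?_
  rw [norm_sq_stack, mul_pow, Real.sq_sqrt (by positivity)]
  simp

lemma sqrt_mul_norm_avg_le (V : Stack R d) : √R * ‖(R : ℝ)⁻¹ • ∑ r, V r‖ ≤ ‖V‖ := by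
  rcases Nat.eq_zero_or_pos R with rfl | hR
  · simp
  refine le_of_sq_le_sq ?_ (norm_nonneg _)
  have hR' : (0 : ℝ) < R := by exact_mod_cast hR
  rw [norm_smul, mul_pow, mul_pow, Real.sq_sqrt (by positivity), norm_sq_stack]
  have h1 : ‖∑ r, V r‖ ^ 2 ≤ R * ∑ r, ‖V r‖ ^ 2 := by
    refine (pow_le_pow_left₀ (norm_nonneg _) (norm_sum_le _ _) 2).trans ?_
    simpa using sq_sum_le_card_mul_sum_sq (s := Finset.univ) (f := fun r : Fin R => ‖V r‖)
  rw [Real.norm_of_nonneg (by positivity)]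
  calc (R : ℝ) * ((R : ℝ)⁻¹ ^ 2 * ‖∑ r, V r‖ ^ 2)
      ≤ (R : ℝ) * ((R : ℝ)⁻¹ ^ 2 * (R * ∑ r, ‖V r‖ ^ 2)) := by gcongr
    _ = _ := by field_simp

lemma norm_apply_stack_le {L : ℝ} (hL : 0 ≤ L)
    {Hop : Fin R → (EuclideanSpace ℝ (Fin d) →L[ℝ] EuclideanSpace ℝ (Fin d))}
    (hHL : ∀ r, ‖Hop r‖ ≤ L) (V : Stack R d) :
    ‖(WithLp.toLp 2 fun r => Hop r (V r) : Stack R d)‖ ≤ L * ‖V‖ := by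
  refine le_of_sq_le_sq ?_ (by positivity)
  rw [norm_sq_stack, mul_pow, norm_sq_stack, Finset.mul_sum]
  refine Finset.sum_le_sum fun r _ => ?_
  rw [← mul_pow]
  exact pow_le_pow_left₀ (norm_nonneg _) ((Hop r).le_of_opNorm_le (hHL r) _) 2

/-! ### The centralized gradient step -/

/-- A gradient step contracts by `1 - (3/4) μ m`. It relies on the cocoercivity bound
`‖H u‖² ≤ L ⟪H u, u⟫`, obtained from positivity of `H` at `L u - H u`. -/
lemma norm_gradient_step_le {E : Type*} [NormedAddCommGroup E] [InnerProductSpace ℝ E]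
    {H : E →L[ℝ] E} {L m μ : ℝ} (hL : 0 < L) (hm : 0 < m) (hmL : m ≤ L)
    (hsym : ∀ u v, ⟪H u, v⟫ = ⟪u, H v⟫) (hpos : ∀ u, m * ‖u‖ ^ 2 ≤ ⟪H u, u⟫)
    (hH : ‖H‖ ≤ L) (hμ : 0 < μ) (hμL : μ * L ≤ 1 / 2) (u : E) :
    ‖u - μ • H u‖ ≤ (1 - 3 / 4 * (μ * m)) * ‖u‖ := by
  have hμm : μ * m ≤ μ * L := mul_le_mul_of_nonneg_left hmL hμ.le
  have hco : ‖H u‖ ^ 2 ≤ L * ⟪H u, u⟫ := by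
    have h1 := hpos (L • u - H u)
    have h2 : 0 ≤ m * ‖L • u - H u‖ ^ 2 := by positivity
    have h3 : ⟪H (L • u - H u), L • u - H u⟫
        = L ^ 2 * ⟪H u, u⟫ - 2 * L * ‖H u‖ ^ 2 + ⟪H (H u), H u⟫ := by
      rw [map_sub, map_smul]
      simp only [inner_sub_left, inner_sub_right, inner_smul_left, inner_smul_right]
      rw [hsym (H u) u, real_inner_self_eq_norm_sq]
      simp
      ring
    have h4 : ⟪H (H u), H u⟫ ≤ L * ‖H u‖ ^ 2 := by
      refine (real_inner_le_norm _ _).trans ?_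
      rw [sq, ← mul_assoc]
      exact mul_le_mul_of_nonneg_right (H.le_of_opNorm_le hH _) (norm_nonneg _)
    have h5 : L * ‖H u‖ ^ 2 ≤ L * (L * ⟪H u, u⟫) := by nlinarith
    exact le_of_mul_le_mul_left h5 hL
  refine le_of_sq_le_sq ?_ (mul_nonneg (by linarith) (norm_nonneg _))
  rw [norm_sub_sq_real, inner_smul_right, norm_smul, mul_pow, mul_pow, Real.norm_of_nonneg hμ.le,
    real_inner_comm]
  have h1 : μ ^ 2 * ‖H u‖ ^ 2 ≤ μ ^ 2 * (L * ⟪H u, u⟫) :=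
    mul_le_mul_of_nonneg_left hco (by positivity)
  have hg := hpos u
  have hg0 : 0 ≤ ⟪H u, u⟫ := le_trans (by positivity) hg
  have h2 : μ * L * (μ * ⟪H u, u⟫) ≤ 1 / 2 * (μ * ⟪H u, u⟫) :=
    mul_le_mul_of_nonneg_right hμL (by positivity)
  have h3 : μ * (m * ‖u‖ ^ 2) ≤ μ * ⟪H u, u⟫ := mul_le_mul_of_nonneg_left hg hμ.le
  nlinarith [sq_nonneg (3 / 4 * (μ * m) * ‖u‖)]


/-! ### Contraction over one block -/

/-- One full block: the Lyapunov function contracts, and it controls all three error quantities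
throughout the block. -/
lemma block_step (n : ℕ) (hn : 1 ≤ n) {η Q x ε : ℝ} (hη : 0 ≤ η)
    (hQ : 1 ≤ Q) (hx : Q * x = η) (hε0 : 0 ≤ ε) (hε1 : ε < 1)
    (hh : η * (n : ℝ) ^ 2 ≤ (1 - ε) ^ 2 / 72) (hq : Q * η ^ 2 * (n : ℝ) ^ 2 ≤ (1 - ε) ^ 2 / 1000)
    (c t σ : ℕ → ℝ) (hc0 : 0 ≤ c 0) (ht0 : 0 ≤ t 0) (hσ0 : 0 ≤ σ 0)
    (hc : ∀ j ≤ n, c j ≤ c 0 + ∑ l ∈ Finset.range j, η * t l)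
    (hcn : c n ≤ ε * c 0 + ∑ l ∈ Finset.range n, η * t l)
    (ht : ∀ j ≤ n, t j ≤ t 0 + ∑ l ∈ Finset.range j, ((2 + η) * c l + η * t l + η * σ l))
    (htn : t n ≤ ε * t 0 + ∑ l ∈ Finset.range n, ((2 + η) * c l + η * t l + η * σ l))
    (hσ : ∀ j < n, σ (j + 1) ≤ (1 - 3 / 4 * x) * σ j + η * c j) :
    lyap n η Q ε (c n) (t n) (σ n) ≤ (1 - n * x / 4) * lyap n η Q ε (c 0) (t 0) (σ 0) ∧
      ∀ j ≤ n, c j ≤ 7 * lyap n η Q ε (c 0) (t 0) (σ 0) ∧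
        t j ≤ 7 * lyap n η Q ε (c 0) (t 0) (σ 0) ∧
        σ j ≤ 7 * lyap n η Q ε (c 0) (t 0) (σ 0) := by
  have hn1 : (1 : ℝ) ≤ n := by exact_mod_cast hn
  have hδ : 0 < 1 - ε := by linarith
  have hx0 : 0 ≤ x := by
    by_contra h
    push Not at h
    nlinarith
  have hxη : x ≤ η := by nlinarith
  have hδ2 : (1 - ε) ^ 2 ≤ 1 := by nlinarith
  have hh' : η * (n : ℝ) ^ 2 ≤ 1 / 72 := by linarith
  have hηn : η * n ≤ 1 / 72 := by
    have : (n : ℝ) ≤ (n : ℝ) ^ 2 := by nlinarith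
    exact (mul_le_mul_of_nonneg_left this hη).trans hh'
  have hxn : x * n ≤ 1 / 72 := (mul_le_mul_of_nonneg_right hxη (by linarith)).trans hηn
  obtain ⟨A, hA⟩ : ∃ A, A = 2 * t 0 + 6 * n * c 0 + 2 * η * n * σ 0 := ⟨_, rfl⟩
  have hA0 : 0 ≤ A := by rw [hA]; positivity
  have hg := block_growth n hn hη hh' (a := 3 / 4 * x) (by linarith) (by linarith) c t σ
    hc0 ht0 hσ0 hA hc ht hσ
  obtain ⟨g1, -⟩ := growth_arith hn1 hη hh' hc0 ht0 hσ0 hA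
  have hM0 : 0 ≤ c 0 + η * n * A := by positivity
  have hσ' : ∀ l ≤ n, σ l ≤ σ 0 + n * η * (c 0 + η * n * A) := by
    intro l hl
    have h1 := (hg l hl).2.2
    have h2 : (l : ℝ) ≤ n := by exact_mod_cast hl
    have h3 : (l : ℝ) * (η * (c 0 + η * n * A)) ≤ n * (η * (c 0 + η * n * A)) :=
      mul_le_mul_of_nonneg_right h2 (by positivity)
    have h4 : 0 ≤ 3 / 4 * x * l / 2 * σ 0 := by positivity
    linarith
  constructor
  · refine contraction_arith hn1 hη hQ hx hε0 hε1 hh hq hc0 ht0 hσ0 hA ?_ ?_ ?_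
    · have := Finset.sum_le_card_nsmul (Finset.range n) (fun l => η * t l) (η * A) (by
        intro l hl
        exact mul_le_mul_of_nonneg_left (hg l (Finset.mem_range.1 hl).le).2.1 hη)
      simp only [Finset.card_range, nsmul_eq_mul] at this
      linarith
    · have := Finset.sum_le_card_nsmul (Finset.range n)
        (fun l => (2 + η) * c l + η * t l + η * σ l)
        ((2 + η) * (c 0 + η * n * A) + η * A + η * (σ 0 + n * η * (c 0 + η * n * A))) (by
        intro l hl
        have hl := (Finset.mem_range.1 hl).le
        have p1 := mul_le_mul_of_nonneg_left (hg l hl).1 (by linarith : 0 ≤ 2 + η)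
        have p2 := mul_le_mul_of_nonneg_left (hg l hl).2.1 hη
        have p3 := mul_le_mul_of_nonneg_left (hσ' l hl) hη
        linarith)
      simp only [Finset.card_range, nsmul_eq_mul] at this
      linarith
    · have := (hg n le_rfl).2.2
      linarith
  · have hα : 4 * (n : ℝ) ≤ (4 * n + 60 * Q * η * n) / (1 - ε) := by
      rw [le_div_iff₀ hδ]
      have h1 : 0 ≤ 60 * Q * η * n := by positivity
      have h2 : 0 ≤ 4 * (n : ℝ) * ε := by positivity
      linarith
    have hV : 4 * (n : ℝ) * c 0 + t 0 + 20 * σ 0 ≤ lyap n η Q ε (c 0) (t 0) (σ 0) := by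
      have p1 := mul_le_mul_of_nonneg_right hα hc0
      have p2 := mul_le_mul_of_nonneg_right hQ hσ0
      unfold lyap
      linarith
    have hnc : c 0 ≤ n * c 0 := le_mul_of_one_le_left hc0 hn1
    have q1 : η * n * σ 0 ≤ 1 / 72 * σ 0 := mul_le_mul_of_nonneg_right hηn hσ0
    have q2 : η * n * A ≤ 1 / 72 * A := mul_le_mul_of_nonneg_right hηn hA0
    have q3 : n * η * (c 0 + η * n * A) ≤ 1 / 72 * (c 0 + η * n * A) :=
      mul_le_mul_of_nonneg_right (by linarith) hM0
    intro j hj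
    obtain ⟨h1, h2, -⟩ := hg j hj
    have h3 := hσ' j hj
    refine ⟨?_, ?_, ?_⟩ <;> linarith

/-! ### The averaged and centered recursions -/

lemma center_add (V V' : Stack R d) : center (V + V') = center V + center V' := by
  ext1 r
  simp only [center_apply, PiLp.add_apply, Finset.sum_add_distrib, smul_add]
  abel

lemma center_smul (x : ℝ) (V : Stack R d) : center (x • V) = x • center V := by
  ext1 r
  simp only [center_apply, PiLp.smul_apply, ← Finset.smul_sum, smul_sub]
  rw [smul_comm]

lemma sum_mix {M : Matrix (Fin R) (Fin R) ℝ} (hcol : ∀ q, ∑ r, M r q = 1) (V : Stack R d) :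
    ∑ r, mix M V r = ∑ r, V r := by
  simp only [mix_apply]
  rw [Finset.sum_comm]
  refine Finset.sum_congr rfl fun q _ => ?_
  rw [← Finset.sum_smul, hcol, one_smul]

lemma center_mix {M : Matrix (Fin R) (Fin R) ℝ} (hrow : ∀ r, ∑ q, M r q = 1)
    (hcol : ∀ q, ∑ r, M r q = 1) (V : Stack R d) : center (mix M V) = mix M (center V) := by
  ext1 r
  rw [center_apply, sum_mix hcol, mix_apply, mix_apply]
  simp only [center_apply, smul_sub, Finset.sum_sub_distrib]
  rw [← Finset.sum_smul, hrow, one_smul]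

/-- One step of the averaged iterate, an inexact gradient step on `F` whose error comes from the
disagreement `C`. Norms of averages are scaled by `√R`, the norm of `𝟙 ⊗ s` being `√R ‖s‖`. -/
lemma norm_step_bounds (hR : 0 < R) {L m μ : ℝ} (hL : 0 < L) (hm : 0 < m) (hmL : m ≤ L)
    {Hop : Fin R → (EuclideanSpace ℝ (Fin d) →L[ℝ] EuclideanSpace ℝ (Fin d))}
    (hHsym : ∀ r u v, ⟪Hop r u, v⟫ = ⟪u, Hop r v⟫)
    (hHL : ∀ r, ‖Hop r‖ ≤ L)
    {Hbar : EuclideanSpace ℝ (Fin d) →L[ℝ] EuclideanSpace ℝ (Fin d)}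
    (hHbar : Hbar = (R : ℝ)⁻¹ • ∑ r, Hop r)
    (hstrong : ∀ u, m * ‖u‖ ^ 2 ≤ ⟪Hbar u, u⟫)
    (hμ : 0 < μ) (hμL : μ * L ≤ 1 / 2)
    {s s' : EuclideanSpace ℝ (Fin d)} {C : Stack R d}
    (hs : s' = s - μ • (Hbar s + (R : ℝ)⁻¹ • ∑ r, Hop r (C r))) :
    √R * ‖s'‖ ≤ (1 - 3 / 4 * (μ * m)) * (√R * ‖s‖) + μ * L * ‖C‖ ∧
      √R * ‖s' - s‖ ≤ μ * L * (√R * ‖s‖ + ‖C‖) := by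
  have hR' : (0 : ℝ) < R := by exact_mod_cast hR
  have hsym : ∀ u v, ⟪Hbar u, v⟫ = ⟪u, Hbar v⟫ := by
    intro u v
    simp [hHbar, inner_smul_left, inner_smul_right, sum_inner, inner_sum, hHsym]
  have hHb : ‖Hbar‖ ≤ L := by
    rw [hHbar, norm_smul, Real.norm_of_nonneg (by positivity)]
    have h1 : ‖∑ r, Hop r‖ ≤ R * L := by
      refine (norm_sum_le _ _).trans ?_
      simpa using Finset.sum_le_card_nsmul Finset.univ (fun r => ‖Hop r‖) L (fun r _ => hHL r)
    calc (R : ℝ)⁻¹ * ‖∑ r, Hop r‖ ≤ (R : ℝ)⁻¹ * (R * L) := by gcongr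
      _ = L := by field_simp
  set e := (R : ℝ)⁻¹ • ∑ r, Hop r (C r) with he
  have hE : √R * ‖e‖ ≤ L * ‖C‖ :=
    (sqrt_mul_norm_avg_le (WithLp.toLp 2 fun r => Hop r (C r))).trans
      (norm_apply_stack_le hL.le hHL C)
  have hr : 0 ≤ √(R : ℝ) := Real.sqrt_nonneg _
  constructor
  · have h1 : s' = (s - μ • Hbar s) - μ • e := by rw [hs, smul_add]; abel
    have h2 : ‖s'‖ ≤ (1 - 3 / 4 * (μ * m)) * ‖s‖ + μ * ‖e‖ := by
      rw [h1]
      refine (norm_sub_le _ _).trans (add_le_add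
        (norm_gradient_step_le hL hm hmL hsym hstrong hHb hμ hμL s) ?_)
      rw [norm_smul, Real.norm_of_nonneg hμ.le]
    have h3 := mul_le_mul_of_nonneg_left h2 hr
    have h4 := mul_le_mul_of_nonneg_left hE hμ.le
    linarith
  · have h1 : s' - s = -(μ • (Hbar s + e)) := by rw [hs]; abel
    have h2 : ‖s' - s‖ ≤ μ * (L * ‖s‖ + ‖e‖) := by
      rw [h1, norm_neg, norm_smul, Real.norm_of_nonneg hμ.le]
      exact mul_le_mul_of_nonneg_left ((norm_add_le _ _).trans
        (add_le_add_left (Hbar.le_of_opNorm_le hHb _) _)) hμ.le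
    have h3 := mul_le_mul_of_nonneg_left h2 hr
    have h4 := mul_le_mul_of_nonneg_left hE hμ.le
    linarith

end GTDiff

/-! ### Linear convergence -/

set_option maxHeartbeats 1000000 in
/-- **Linear convergence of Graph-Aware ATC GT-Diffusion**: under the stated
stepsize condition, the block maxima of disagreement, tracking error and average
optimality error decay linearly, and the stacked state converges to `𝟙 ⊗ z*`. -/
theorem gt_diffusion_linear_convergence
    (R d τ : ℕ) (hR : 0 < R) (hd : 0 < d) (hτ : 0 < τ)
    (L m : ℝ) (hm : 0 < m) (hmL : m ≤ L)
    -- quadratic local losses via symmetric PSD Hessians H_r with ‖H_r‖ ≤ L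
    (Hop : Fin R → (EuclideanSpace ℝ (Fin d) →L[ℝ] EuclideanSpace ℝ (Fin d)))
    (hHsym : ∀ r u v, ⟪Hop r u, v⟫ = ⟪u, Hop r v⟫)
    (hHpsd : ∀ r u, 0 ≤ ⟪Hop r u, u⟫)
    (hHL : ∀ r, ‖Hop r‖ ≤ L)
    (b : Fin R → EuclideanSpace ℝ (Fin d))
    (Hbar : EuclideanSpace ℝ (Fin d) →L[ℝ] EuclideanSpace ℝ (Fin d))
    (hHbar : Hbar = (R : ℝ)⁻¹ • ∑ r, Hop r)
    (hstrong : ∀ u, m * ‖u‖ ^ 2 ≤ ⟪Hbar u, u⟫)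
    (bbar : EuclideanSpace ℝ (Fin d)) (hbbar : bbar = (R : ℝ)⁻¹ • ∑ r, b r)
    (zstar : EuclideanSpace ℝ (Fin d)) (hzstar : Hbar zstar + bbar = 0)
    -- condition number
    (Q : ℝ) (hQ : Q = L / m)
    -- doubly stochastic mixing matrices with block contraction ε_τ < 1
    (W : Fin τ → Matrix (Fin R) (Fin R) ℝ)
    (hWnonneg : ∀ l r q, 0 ≤ W l r q)
    (hWrow : ∀ l r, ∑ q, W l r q = 1)
    (hWcol : ∀ l q, ∑ r, W l r q = 1)
    (P : ℕ → Matrix (Fin R) (Fin R) ℝ)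
    (hP0 : P 0 = 1)
    (hPsucc : ∀ (l : ℕ) (hl : l < τ), P (l+1) = W ⟨l, hl⟩ * P l)
    (ε : ℝ) (hε0 : 0 < ε) (hε1 : ε < 1)
    (hcontr : ‖Matrix.toEuclideanCLM (𝕜 := ℝ)
        (P τ - Matrix.of fun _ _ : Fin R => (R : ℝ)⁻¹)‖ = ε)
    -- c_W bounds the operator norm of (𝒲^l − I) on the range of J⊥, and c_W ≤ 2
    (cW : ℝ) (hcW0 : 0 < cW) (hcW2 : cW ≤ 2)
    (hcW : ∀ (l : Fin τ) (V Vmix : PiLp 2 fun _ : Fin R => EuclideanSpace ℝ (Fin d)),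
        (∑ r, V r = 0) →
        (∀ r, Vmix r = (∑ q, W l r q • V q) - V r) →
        ‖Vmix‖ ≤ cW * ‖V‖)
    -- the constants of the convergence analysis
    (c₁ c₂ c₃ c₄ cP cS cH' K₃ : ℝ)
    (hc₁ : c₁ = 2 - 1 / (τ : ℝ))
    (hc₂ : c₂ = (2 * (τ : ℝ) + 1) * ((τ : ℝ) - 1))
    (hc₃ : c₃ = 1 + ε)
    (hc₄ : c₄ = 2 * (τ : ℝ) + 1)
    (hcP : cP = 2 + 4 * (1 + ε) / (1 - ε))
    (hcS : cS = (4 / (1 - ε)) * cP)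
    (hcH' : cH' = 2 * c₁ * (c₂ * c₃ + (τ : ℝ) * c₄)
        * (2 / (1 - ε) + 4 * (1 + ε) / (1 - ε) ^ 2))
    (hK₃ : K₃ = cP * (19 * c₁ * c₂ ^ 2 * (c₂ * c₃ + (τ : ℝ) * c₄)
        + 60 * cS * c₁ ^ 2 * c₂ * (c₂ * c₃ + (τ : ℝ) * c₄) ^ 2
        + 48 * cS ^ 2 * (1 + cP) * c₁ ^ 3 * (c₂ * c₃ + (τ : ℝ) * c₄) ^ 3))
    -- the stepsize condition
    (μ : ℝ) (hμ : 0 < μ)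
    (hμ1 : μ ≤ 1 / ((τ : ℝ) * m))
    (hμ2 : μ ≤ 1 / (4 * c₂ * L))
    (hμ3 : μ ≤ 1 / (2 * cH' * L))
    (hμ4 : μ ≤ (1 / L) * Real.sqrt (3 * (τ : ℝ) / (2 * Q * K₃)))
    -- the gradient-tracking diffusion recursion
    (Z G : ℕ → Fin R → EuclideanSpace ℝ (Fin d))
    (hZ : ∀ (k : ℕ) (r : Fin R), Z (k+1) r
        = ∑ q, W ⟨k % τ, Nat.mod_lt k hτ⟩ r q • (Z k q - μ • G k q))
    (hG : ∀ (k : ℕ) (r : Fin R), G (k+1) r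
        = (∑ q, W ⟨k % τ, Nat.mod_lt k hτ⟩ r q • G k q)
          + (Hop r (Z (k+1) r) + b r) - (Hop r (Z k r) + b r))
    (hG0 : ∀ r, G 0 r = Hop r (Z 0 r) + b r)
    -- 𝒞^k = J⊥ Z^k, 𝒯^k = J⊥ G^k, s^k = z̄^k − z*
    (C T : ℕ → PiLp 2 fun _ : Fin R => EuclideanSpace ℝ (Fin d))
    (hC : ∀ (k : ℕ) (r : Fin R), C k r = Z k r - (R : ℝ)⁻¹ • ∑ q, Z k q)
    (hT : ∀ (k : ℕ) (r : Fin R), T k r = G k r - (R : ℝ)⁻¹ • ∑ q, G k q)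
    (s : ℕ → EuclideanSpace ℝ (Fin d))
    (hs : ∀ k, s k = ((R : ℝ)⁻¹ • ∑ r, Z k r) - zstar)
    -- block maxima over 𝓘_i = {iτ, …, (i+1)τ−1}
    (Cb Tb Sb : ℕ → ℝ)
    (hCb : ∀ i, IsGreatest ((fun k => ‖C k‖) '' Set.Ico (i * τ) ((i + 1) * τ)) (Cb i))
    (hTb : ∀ i, IsGreatest ((fun k => ‖T k‖) '' Set.Ico (i * τ) ((i + 1) * τ)) (Tb i))
    (hSb : ∀ i, IsGreatest ((fun k => ‖s k‖) '' Set.Ico (i * τ) ((i + 1) * τ)) (Sb i)) :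
    ∃ ϱ : ℝ, 0 < ϱ ∧
      (∀ i : ℕ, Cb i + Tb i + Sb i
          ≤ ϱ * (1 - (m * (τ : ℝ) / 4) * μ) ^ i * (Cb 0 + Tb 0 + Sb 0))
      ∧ Filter.Tendsto (fun k => ‖C k‖) Filter.atTop (nhds 0)
      ∧ Filter.Tendsto (fun k => ‖T k‖) Filter.atTop (nhds 0)
      ∧ Filter.Tendsto (fun k => ‖s k‖) Filter.atTop (nhds 0)
      ∧ ∀ r : Fin R, Filter.Tendsto (fun k => Z k r) Filter.atTop (nhds zstar) := by
  have hR' : (0 : ℝ) < R := by exact_mod_cast hR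
  have hτ1 : (1 : ℝ) ≤ τ := by exact_mod_cast hτ
  have hL : 0 < L := by linarith
  have hsR : 1 ≤ √(R : ℝ) := by
    rw [Real.one_le_sqrt]
    exact_mod_cast hR
  obtain ⟨hh, hq⟩ := GTDiff.stepsize_bounds hτ hL hm hQ hε0 hε1 hc₁ hc₂ hc₃ hc₄ hcP hcS hcH' hK₃
    hμ hμ3 hμ4
  obtain ⟨η, hη⟩ : ∃ η, η = μ * L := ⟨_, rfl⟩
  rw [← hη] at hh hq
  have hη0 : 0 < η := by rw [hη]; positivity
  have hQ1 : 1 ≤ Q := by rw [hQ, le_div_iff₀ hm]; linarith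
  have hQx : Q * (μ * m) = η := by rw [hQ, hη]; field_simp
  have hητ : η * τ ≤ 1 / 72 := by
    have h1 : (τ : ℝ) ≤ (τ : ℝ) ^ 2 := le_self_pow₀ hτ1 two_ne_zero
    have h2 := mul_le_mul_of_nonneg_left h1 hη0.le
    have h3 : (1 - ε) ^ 2 ≤ 1 := pow_le_one₀ (sub_nonneg.2 hε1.le) (sub_le_self 1 hε0.le)
    linarith
  have hη2 : η ≤ 1 / 2 := by linarith [le_mul_of_one_le_right hη0.le hτ1]
  -- the recursion in stacked form
  let Zs : ℕ → GTDiff.Stack R d := fun k => WithLp.toLp 2 (Z k)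
  let Gs : ℕ → GTDiff.Stack R d := fun k => WithLp.toLp 2 (G k)
  let D : ℕ → GTDiff.Stack R d := fun k => WithLp.toLp 2 fun r => Hop r (Z (k + 1) r - Z k r)
  let Wk : ℕ → Matrix (Fin R) (Fin R) ℝ := fun k => W ⟨k % τ, Nat.mod_lt k hτ⟩
  have hCc : ∀ k, C k = GTDiff.center (Zs k) := fun k => by ext1 r; exact hC k r
  have hTc : ∀ k, T k = GTDiff.center (Gs k) := fun k => by ext1 r; exact hT k r
  have hZs : ∀ k, Zs (k + 1) = GTDiff.mix (Wk k) (Zs k + (-μ) • Gs k) := fun k => by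
    ext1 r
    refine (hZ k r).trans (Finset.sum_congr rfl fun q _ => ?_)
    simp only [Zs, Gs, Wk, neg_smul, ← sub_eq_add_neg, PiLp.sub_apply, PiLp.smul_apply]
  have hGs : ∀ k, Gs (k + 1) = GTDiff.mix (Wk k) (Gs k) + D k := fun k => by
    ext1 r
    refine (hG k r).trans ?_
    simp only [Gs, D, Wk, PiLp.add_apply, GTDiff.mix_apply, map_sub]
    abel
  have hCrec : ∀ k, C (k + 1) = GTDiff.mix (Wk k) (C k) + GTDiff.mix (Wk k) ((-μ) • T k) :=
    fun k => by
      rw [hCc, hZs, GTDiff.center_mix (hWrow _) (hWcol _), GTDiff.center_add, GTDiff.center_smul,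
        ← hCc, ← hTc, GTDiff.mix_add]
  have hTrec : ∀ k, T (k + 1) = GTDiff.mix (Wk k) (T k) + GTDiff.center (D k) := fun k => by
    rw [hTc, hGs, GTDiff.center_add, GTDiff.center_mix (hWrow _) (hWcol _), ← hTc]
  have hC0 : ∀ k, ∑ r, C k r = 0 := fun k => by rw [hCc]; exact GTDiff.sum_center hR _
  have hT0 : ∀ k, ∑ r, T k r = 0 := fun k => by rw [hTc]; exact GTDiff.sum_center hR _
  -- the average of the trackers is the average gradient
  have hGsum : ∀ k, ∑ r, G k r = ∑ r, (Hop r (Z k r) + b r) := by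
    intro k
    induction k with
    | zero => exact Finset.sum_congr rfl fun r _ => hG0 r
    | succ k ih =>
      have h1 : ∑ r, Gs (k + 1) r = ∑ r, G k r + ∑ r, D k r := by
        rw [hGs]
        simp only [PiLp.add_apply, Finset.sum_add_distrib]
        rw [GTDiff.sum_mix (hWcol _)]
      refine h1.trans ?_
      rw [ih, ← Finset.sum_add_distrib]
      refine Finset.sum_congr rfl fun r _ => ?_
      simp only [D, map_sub]
      abel
  have hZC : ∀ k r, Z k r = C k r + s k + zstar := fun k r => by rw [hC, hs]; abel
  have hGavg : ∀ k, (R : ℝ)⁻¹ • ∑ r, G k r = Hbar (s k) + (R : ℝ)⁻¹ • ∑ r, Hop r (C k r) := by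
    intro k
    have h1 : ∑ r, (Hop r (Z k r) + b r)
        = ∑ r, Hop r (C k r) + (∑ r, Hop r) (s k) + ((∑ r, Hop r) zstar + ∑ r, b r) := by
      simp only [sum_apply, ← Finset.sum_add_distrib]
      refine Finset.sum_congr rfl fun r _ => ?_
      rw [hZC k r, map_add, map_add]
      abel
    have h2 : (R : ℝ)⁻¹ • ((∑ r, Hop r) zstar + ∑ r, b r) = 0 := by
      rw [← hzstar, hHbar, hbbar, smul_add]
      rfl
    rw [hGsum, h1, smul_add, h2, add_zero, smul_add, hHbar, add_comm]
    rfl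
  have hsrec : ∀ k, s (k + 1) = s k - μ • (Hbar (s k) + (R : ℝ)⁻¹ • ∑ r, Hop r (C k r)) := by
    intro k
    have h1 : ∑ r, Z (k + 1) r = ∑ r, Z k r - μ • ∑ r, G k r := by
      have : ∑ r, Zs (k + 1) r = ∑ r, (Zs k + (-μ) • Gs k) r := by
        rw [hZs, GTDiff.sum_mix (hWcol _)]
      refine this.trans ?_
      simp only [Zs, Gs, neg_smul, ← sub_eq_add_neg, PiLp.sub_apply, PiLp.smul_apply,
        Finset.sum_sub_distrib, ← Finset.smul_sum]
    rw [← hGavg, hs, hs, h1, smul_sub, smul_comm μ]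
    abel
  have hsb := fun k => GTDiff.norm_step_bounds hR hL hm hmL hHsym hHL hHbar hstrong hμ
    (by rw [← hη]; exact hη2) (hsrec k)
  -- sizes of the perturbations in `hCrec` and `hTrec`
  have hmixn : ∀ k (V : GTDiff.Stack R d), ‖GTDiff.mix (Wk k) V‖ ≤ ‖V‖ := fun k V =>
    GTDiff.norm_mix_le (hWnonneg _) (hWrow _) (hWcol _) V
  have hN1 : ∀ k, ‖GTDiff.mix (Wk k) ((-μ) • T k)‖ ≤ η * (‖T k‖ / L) := fun k => by
    refine (hmixn k _).trans (le_of_eq ?_)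
    rw [norm_smul, norm_neg, Real.norm_of_nonneg hμ.le, hη]
    field_simp
  have hN2 : ∀ k, ‖GTDiff.center (D k)‖
      ≤ L * ((2 + η) * ‖C k‖ + η * (‖T k‖ / L) + η * (√R * ‖s k‖)) := fun k => by
    have h1 : ‖D k‖ ≤ L * ‖Zs (k + 1) - Zs k‖ :=
      GTDiff.norm_apply_stack_le hL.le hHL (Zs (k + 1) - Zs k)
    have h2 : Zs (k + 1) - Zs k
        = (C (k + 1) - C k) + WithLp.toLp 2 (fun _ => s (k + 1) - s k) := by
      ext1 r
      simp only [Zs, PiLp.add_apply, PiLp.sub_apply]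
      rw [hZC (k + 1), hZC k]
      abel
    have h3 : ‖C (k + 1)‖ ≤ ‖C k‖ + η * (‖T k‖ / L) := by
      rw [hCrec]
      exact (norm_add_le _ _).trans (add_le_add (hmixn k _) (hN1 k))
    have h4 : ‖Zs (k + 1) - Zs k‖
        ≤ (2 + η) * ‖C k‖ + η * (‖T k‖ / L) + η * (√R * ‖s k‖) := by
      rw [h2]
      refine (norm_add_le _ _).trans ?_
      rw [GTDiff.norm_const_stack]
      have h5 := norm_sub_le (C (k + 1)) (C k)
      have h6 := (hsb k).2
      rw [← hη] at h6
      linarith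
    exact (GTDiff.norm_center_le hR _).trans
      (h1.trans (mul_le_mul_of_nonneg_left h4 hL.le))
  -- Lyapunov values at the block starts
  let V : ℕ → ℝ := fun i =>
    GTDiff.lyap τ η Q ε ‖C (i * τ)‖ (‖T (i * τ)‖ / L) (√R * ‖s (i * τ)‖)
  have hblock : ∀ i, V (i + 1) ≤ (1 - τ * (μ * m) / 4) * V i ∧ ∀ j ≤ τ,
      ‖C (i * τ + j)‖ ≤ 7 * V i ∧ ‖T (i * τ + j)‖ / L ≤ 7 * V i ∧
        √R * ‖s (i * τ + j)‖ ≤ 7 * V i := by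
    intro i
    have hWk : ∀ (j : ℕ) (hj : j < τ), Wk (i * τ + j) = W ⟨j, hj⟩ := by
      intro j hj
      have : (i * τ + j) % τ = j := by
        rw [Nat.mul_comm, Nat.mul_add_mod, Nat.mod_eq_of_lt hj]
      simp only [Wk, this]
    have bC := GTDiff.norm_block_le hWnonneg hWrow hWcol hP0 hPsucc hcontr
      (fun j => C (i * τ + j)) (fun j => GTDiff.mix (Wk (i * τ + j)) ((-μ) • T (i * τ + j)))
      (fun j => η * (‖T (i * τ + j)‖ / L)) (hC0 _)
      (fun j hj => by rw [← hWk j hj]; exact hCrec (i * τ + j)) (fun j _ => hN1 _)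
    have bT := GTDiff.norm_block_le hWnonneg hWrow hWcol hP0 hPsucc hcontr
      (fun j => T (i * τ + j)) (fun j => GTDiff.center (D (i * τ + j)))
      (fun j => L * ((2 + η) * ‖C (i * τ + j)‖ + η * (‖T (i * τ + j)‖ / L)
        + η * (√R * ‖s (i * τ + j)‖))) (hT0 _)
      (fun j hj => by rw [← hWk j hj]; exact hTrec (i * τ + j)) (fun j _ => hN2 _)
    have key := GTDiff.block_step τ hτ hη0.le hQ1 hQx hε0.le hε1 hh hq
      (fun j => ‖C (i * τ + j)‖) (fun j => ‖T (i * τ + j)‖ / L) (fun j => √R * ‖s (i * τ + j)‖)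
      (by positivity) (by positivity) (by positivity) bC.1 bC.2
      (fun j hj => by
        rw [div_le_iff₀ hL]
        refine (bT.1 j hj).trans (le_of_eq ?_)
        rw [← Finset.mul_sum, add_mul, div_mul_cancel₀ _ hL.ne']
        ring)
      (by
        rw [div_le_iff₀ hL]
        refine bT.2.trans (le_of_eq ?_)
        rw [← Finset.mul_sum, add_mul, mul_assoc, div_mul_cancel₀ _ hL.ne']
        ring)
      (fun j _ => by
        have := (hsb (i * τ + j)).1
        rw [← hη] at this
        exact this)
    have e : (i + 1) * τ = i * τ + τ := by ring
    simp only [V, e]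
    exact key
  obtain ⟨lam, hlam⟩ : ∃ lam, lam = 1 - (m * (τ : ℝ) / 4) * μ := ⟨_, rfl⟩
  have hlam' : 1 - τ * (μ * m) / 4 = lam := by rw [hlam]; ring
  rw [← hlam]
  have hlam1 : lam < 1 := by
    have : 0 < m * (τ : ℝ) / 4 * μ := by positivity
    linarith
  have hlam0 : 0 ≤ lam := by
    have h1 : μ * m ≤ η := by rw [hη]; exact mul_le_mul_of_nonneg_left hmL hμ.le
    have h2 : μ * m * τ ≤ η * τ := mul_le_mul_of_nonneg_right h1 (by linarith)
    linarith
  have hVpow : ∀ i, V i ≤ lam ^ i * V 0 := by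
    intro i
    induction i with
    | zero => simp
    | succ i ih =>
      have h1 := (hblock i).1
      rw [hlam'] at h1
      have h2 := mul_le_mul_of_nonneg_left ih hlam0
      rw [pow_succ]
      linarith
  -- block maxima against the Lyapunov values
  have hmax : ∀ i, Cb i + Tb i + Sb i ≤ 7 * (2 + L) * V i := by
    intro i
    have hidx : ∀ k ∈ Set.Ico (i * τ) ((i + 1) * τ), ∃ j ≤ τ, k = i * τ + j := by
      rintro k ⟨hk1, hk2⟩
      rw [Nat.succ_mul] at hk2
      exact ⟨k - i * τ, by omega, by omega⟩
    obtain ⟨k1, hk1, e1⟩ := (hCb i).1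
    obtain ⟨k2, hk2, e2⟩ := (hTb i).1
    obtain ⟨k3, hk3, e3⟩ := (hSb i).1
    obtain ⟨j1, hj1, rfl⟩ := hidx k1 hk1
    obtain ⟨j2, hj2, rfl⟩ := hidx k2 hk2
    obtain ⟨j3, hj3, rfl⟩ := hidx k3 hk3
    have b1 := ((hblock i).2 j1 hj1).1
    have b2 := ((hblock i).2 j2 hj2).2.1
    have b3 := ((hblock i).2 j3 hj3).2.2
    rw [div_le_iff₀ hL] at b2
    have b4 : ‖s (i * τ + j3)‖ ≤ √R * ‖s (i * τ + j3)‖ :=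
      le_mul_of_one_le_left (norm_nonneg _) hsR
    simp only at e1 e2 e3
    rw [← e1, ← e2, ← e3]
    linarith
  obtain ⟨α, hα⟩ : ∃ α, α = (4 * τ + 60 * Q * η * τ) / (1 - ε) := ⟨_, rfl⟩
  have hδ : 0 < 1 - ε := by linarith
  have hα0 : 0 < α := by rw [hα]; positivity
  have hV0 : V 0 ≤ (α + 1 / L + 20 * Q * √R) * (Cb 0 + Tb 0 + Sb 0) := by
    have hmem : 0 ∈ Set.Ico (0 * τ) ((0 + 1) * τ) := ⟨by simp, by simpa using hτ⟩
    have b1 : ‖C 0‖ ≤ Cb 0 := (hCb 0).2 ⟨0, hmem, rfl⟩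
    have b2 : ‖T 0‖ ≤ Tb 0 := (hTb 0).2 ⟨0, hmem, rfl⟩
    have b3 : ‖s 0‖ ≤ Sb 0 := (hSb 0).2 ⟨0, hmem, rfl⟩
    have n1 := norm_nonneg (C 0)
    have n2 := norm_nonneg (T 0)
    have n3 := norm_nonneg (s 0)
    have e : V 0 = α * ‖C 0‖ + 1 / L * ‖T 0‖ + 20 * Q * √R * ‖s 0‖ := by
      simp only [V, GTDiff.lyap, zero_mul, ← hα]
      ring
    rw [e, add_mul, add_mul]
    gcongr <;> linarith
  -- all factors independent of `i`, collected from `hmax` and `hV0`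
  obtain ⟨ϱ, hϱ⟩ : ∃ ϱ, ϱ = 7 * (2 + L) * (α + 1 / L + 20 * Q * √R) := ⟨_, rfl⟩
  have hmain : ∀ i, Cb i + Tb i + Sb i ≤ ϱ * lam ^ i * (Cb 0 + Tb 0 + Sb 0) := by
    intro i
    calc Cb i + Tb i + Sb i ≤ 7 * (2 + L) * V i := hmax i
      _ ≤ 7 * (2 + L) * (lam ^ i * ((α + 1 / L + 20 * Q * √R) * (Cb 0 + Tb 0 + Sb 0))) := by
          have := (hVpow i).trans (mul_le_mul_of_nonneg_left hV0 (pow_nonneg hlam0 i))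
          exact mul_le_mul_of_nonneg_left this (by positivity)
      _ = _ := by rw [hϱ]; ring
  have hlim : Filter.Tendsto (fun k : ℕ => ϱ * lam ^ (k / τ) * (Cb 0 + Tb 0 + Sb 0))
      Filter.atTop (nhds 0) := by
    have h1 := (tendsto_pow_atTop_nhds_zero_of_lt_one hlam0 hlam1).comp
      (Nat.tendsto_div_const_atTop hτ.ne')
    simpa using (h1.const_mul ϱ).mul_const (Cb 0 + Tb 0 + Sb 0)
  have hpt : ∀ k, ‖C k‖ + ‖T k‖ + ‖s k‖ ≤ ϱ * lam ^ (k / τ) * (Cb 0 + Tb 0 + Sb 0) := by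
    intro k
    have hk : k ∈ Set.Ico (k / τ * τ) ((k / τ + 1) * τ) :=
      ⟨Nat.div_mul_le_self k τ, by
        rw [← Nat.div_lt_iff_lt_mul hτ]; exact Nat.lt_succ_self _⟩
    have b1 : ‖C k‖ ≤ Cb (k / τ) := (hCb _).2 ⟨k, hk, rfl⟩
    have b2 : ‖T k‖ ≤ Tb (k / τ) := (hTb _).2 ⟨k, hk, rfl⟩
    have b3 : ‖s k‖ ≤ Sb (k / τ) := (hSb _).2 ⟨k, hk, rfl⟩
    linarith [hmain (k / τ)]
  have tC : Filter.Tendsto (fun k => ‖C k‖) Filter.atTop (nhds 0) :=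
    squeeze_zero (fun _ => norm_nonneg _)
      (fun k => by linarith [hpt k, norm_nonneg (T k), norm_nonneg (s k)]) hlim
  have tT : Filter.Tendsto (fun k => ‖T k‖) Filter.atTop (nhds 0) :=
    squeeze_zero (fun _ => norm_nonneg _)
      (fun k => by linarith [hpt k, norm_nonneg (C k), norm_nonneg (s k)]) hlim
  have ts : Filter.Tendsto (fun k => ‖s k‖) Filter.atTop (nhds 0) :=
    squeeze_zero (fun _ => norm_nonneg _)
      (fun k => by linarith [hpt k, norm_nonneg (C k), norm_nonneg (T k)]) hlim
  refine ⟨ϱ, by rw [hϱ]; positivity, hmain, tC, tT, ts, fun r => ?_⟩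
  rw [tendsto_iff_norm_sub_tendsto_zero]
  refine squeeze_zero (fun _ => norm_nonneg _) (fun k => ?_) (by simpa using tC.add ts)
  have : Z k r - zstar = C k r + s k := by rw [hZC k r]; abel
  rw [this]
  exact (norm_add_le _ _).trans (add_le_add_left (PiLp.norm_apply_le (C k) r) _)
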